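/- arXiv:1507.00201 — 3 statements merged into one kernel-verified Lean document; each statement's English description precedes it below -/
import Mathlib

section
/- Let M ≥ 1 and K ≥ 2 be natural numbers, let I be a subset of ℂ^M not containing the zero vector, let Ω be an arbitrary type, and let g : ℂ^M → Ω and h : Matrix (Fin M) (Fin K) ℂ → Ω be functions. Suppose that for every matrix A ∈ ℂ^{M×K} and every vector s ∈ ℂ^K such that A·s ∈ I, one has g(A·s) = h(A). Then g is constant on I, i.e., for all x, y ∈ I, g(x) = g(y). -/
open scoped Matrix

theorem exists_mulVec_eq_and_mulVec_eq {R m n : Type*} [NonAssocSemiring R] [Fintype n]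
    [Nontrivial n] (x y : m → R) :
    ∃ (A : Matrix m n R) (s t : n → R), A *ᵥ s = x ∧ A *ᵥ t = y := by
  classical
  obtain ⟨j, k, hjk⟩ := exists_pair_ne n
  let A : Matrix m n R := (Matrix.replicateCol n y).updateCol j x
  have mulVec_single_j : A *ᵥ Pi.single j 1 = x := by
    ext i
    simp [A]
  have mulVec_single_k : A *ᵥ Pi.single k 1 = y := by
    ext i
    simp [A, hjk.symm]
  exact ⟨A, Pi.single j 1, Pi.single k 1, mulVec_single_j, mulVec_single_k⟩

theorem no_instantaneous_generalization_general {R m n Ω : Type*} [NonAssocSemiring R]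
    [Fintype n] [Nontrivial n] {I : Set (m → R)} {g : (m → R) → Ω} {h : Matrix m n R → Ω}
    (hgh : ∀ (A : Matrix m n R) (s : n → R), A *ᵥ s ∈ I → g (A *ᵥ s) = h A) :
    ∀ x ∈ I, ∀ y ∈ I, g x = g y := by
  intro x hx y hy
  obtain ⟨A, s, t, rfl, rfl⟩ := exists_mulVec_eq_and_mulVec_eq (n := n) x y
  exact (hgh A s hx).trans (hgh A t hy).symm

/-- Theorem 1 of the paper (case K > 1): any instantaneous generalization of RTFs
to K ≥ 2 sources is constant. -/
theorem no_instantaneous_generalization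
    (M K : ℕ) (hM : 1 ≤ M) (hK : 2 ≤ K)
    (I : Set (Fin M → ℂ)) (hI : (0 : Fin M → ℂ) ∉ I)
    (Ω : Type*) (g : (Fin M → ℂ) → Ω) (h : Matrix (Fin M) (Fin K) ℂ → Ω)
    (hgh : ∀ (A : Matrix (Fin M) (Fin K) ℂ) (s : Fin K → ℂ),
      A.mulVec s ∈ I → g (A.mulVec s) = h A) :
    ∀ x ∈ I, ∀ y ∈ I, g x = g y := by
  have : Nontrivial (Fin K) := Fin.nontrivial_iff_two_le.mpr hK
  exact no_instantaneous_generalization_general hgh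
end

section
/- Let M, K ≥ 1 be natural numbers with K ≥ M, let I be a subset of ℂ^M not containing the zero vector, let Ω be an arbitrary type, and let g : ℂ^M → Ω and h : Matrix (Fin M) (Fin K) ℂ → Ω be functions. Suppose that for every matrix A ∈ ℂ^{M×K} and every vector s ∈ ℂ^K such that A·s ∈ I, one has g(A·s) = h(A). Then g is constant on I, i.e., for all x, y ∈ I, g(x) = g(y). -/
section

open Matrix

variable {R m n Ω : Type*} [NonAssocSemiring R] [Fintype n]

theorem one_submatrix_mulVec [DecidableEq n] (e : m → n) (s : n → R) :
    (1 : Matrix n n R).submatrix e id *ᵥ s = s ∘ e :=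
  congrArg (· ∘ e) (one_mulVec s)

theorem one_submatrix_mulVec_surjective [DecidableEq n] {e : m → n} (he : e.Injective) :
    (((1 : Matrix n n R).submatrix e id).mulVec).Surjective := by
  simpa only [funext (one_submatrix_mulVec (R := R) e)] using he.surjective_comp_right

theorem no_instantaneous_generalization_wide_general (e : m ↪ n)
    (I : Set (m → R)) (g : (m → R) → Ω) (h : Matrix m n R → Ω)
    (hgh : ∀ (A : Matrix m n R) (s : n → R), A *ᵥ s ∈ I → g (A *ᵥ s) = h A) :
    ∀ x ∈ I, ∀ y ∈ I, g x = g y := by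
  classical
  let A : Matrix m n R := (1 : Matrix n n R).submatrix e id
  have hA : A.mulVec.Surjective := one_submatrix_mulVec_surjective e.injective
  have g_eq : ∀ x ∈ I, g x = h A := hA.forall.2 (hgh A)
  exact fun x hx y hy => (g_eq x hx).trans (g_eq y hy).symm

end

/-- Theorem 1 of the paper, case K ≥ M: any instantaneous generalization of RTFs
with at least as many sources as microphones is constant. -/
theorem no_instantaneous_generalization_wide
    (M K : ℕ) (hM : 1 ≤ M) (hK1 : 1 ≤ K) (hKM : M ≤ K)
    (I : Set (Fin M → ℂ)) (hI : (0 : Fin M → ℂ) ∉ I)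
    (Ω : Type*) (g : (Fin M → ℂ) → Ω) (h : Matrix (Fin M) (Fin K) ℂ → Ω)
    (hgh : ∀ (A : Matrix (Fin M) (Fin K) ℂ) (s : Fin K → ℂ),
      A.mulVec s ∈ I → g (A.mulVec s) = h A) :
    ∀ x ∈ I, ∀ y ∈ I, g x = g y :=
  no_instantaneous_generalization_wide_general (Fin.castLEEmb hKM) I g h hgh
end

section
/- Let A ∈ ℂ^{M×K} and S ∈ ℂ^{K×K} be complex matrices with det(S) ≠ 0, and set X = A·S. Let ξ₀ : Fin K → Fin M be an injective row-selection map such that det(A restricted to rows ξ₀) ≠ 0. Then for every injective row-selection map ξ : Fin K → Fin M, det(X restricted to rows ξ) / det(X restricted to rows ξ₀) = det(A restricted to rows ξ) / det(A restricted to rows ξ₀). -/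
section

variable {m n : Type*} [Fintype n] [DecidableEq n]

theorem det_submatrix_mul {R : Type*} [CommRing R] (A : Matrix m n R) (S : Matrix n n R)
    (ξ : n → m) :
    ((A * S).submatrix ξ id).det = (A.submatrix ξ id).det * S.det := by
  rw [Matrix.submatrix_mul A S ξ id id Function.bijective_id, Matrix.submatrix_id_id,
    Matrix.det_mul]

variable {F : Type*} [Field F]

/-- The generalized relative transfer function of `X` with reference rows `ξ₀`: the vector of
maximal minors of `X`, normalized by the minor at `ξ₀`. It is indexed by all row selections; at a
non-injective one the minor has a repeated row and vanishes. It is meaningful only when the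
reference minor is nonzero, and is `0` otherwise. -/
def grtf (X : Matrix m n F) (ξ₀ : n → m) : (n → m) → F :=
  fun ξ ↦ (X.submatrix ξ id).det / (X.submatrix ξ₀ id).det

theorem grtf_independent_of_signals_general (A : Matrix m n F) {S : Matrix n n F}
    (hS : S.det ≠ 0) {ξ₀ : n → m} (hA₀ : (A.submatrix ξ₀ id).det ≠ 0) :
    ((A * S).submatrix ξ₀ id).det ≠ 0 ∧ grtf (A * S) ξ₀ = grtf A ξ₀ := by
  constructor
  · rw [det_submatrix_mul]
    exact mul_ne_zero hA₀ hS
  · funext ξ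
    simp only [grtf, det_submatrix_mul, mul_div_mul_right _ _ hS]

end

/-- The normalized Plücker coordinates (generalized RTF) of X = A·S coincide with
those of A, independently of the emitted-signal matrix S. -/
theorem grtf_independent_of_signals
    (M K : ℕ) (A : Matrix (Fin M) (Fin K) ℂ) (S : Matrix (Fin K) (Fin K) ℂ)
    (hS : S.det ≠ 0) (X : Matrix (Fin M) (Fin K) ℂ) (hX : X = A * S)
    (ξ₀ : Fin K → Fin M) (hξ₀ : Function.Injective ξ₀)
    (hA0 : (A.submatrix ξ₀ id).det ≠ 0) :
    ∀ ξ : Fin K → Fin M, Function.Injective ξ →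
      (X.submatrix ξ id).det / (X.submatrix ξ₀ id).det
        = (A.submatrix ξ id).det / (A.submatrix ξ₀ id).det := by
  subst hX
  exact fun ξ _ ↦ congrFun (grtf_independent_of_signals_general A hS hA0).2 ξ
end
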